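/- Let A and B be polynomial rings over a field k in disjoint sets of variables, R = A ⊗_k B, and let I ⊆ A and J ⊆ B be nonzero proper homogeneous ideals. Then for all n ≥ 1: depth R/(I+J)^{(n)} ≥ min over i ∈ [1, n−1] and j ∈ [1, n] of { depth A/I^{(n−i)} + depth B/J^{(i)} + 1, depth A/I^{(n−j+1)} + depth B/J^{(j)} }. -/

import Mathlib

/-!
The ring `R` is treated as `A ⊗ B`, and an ideal sum `U + V` with `U ⊆ A`, `V ⊆ B` is the kernel
`tId k U V` of `A ⊗ B → A ⧸ U ⊗ B ⧸ V`. The bound comes from the identity (`symbPow_tId_eq`)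

  `(I + J)^{(n)} = ⋂_{1 ≤ j ≤ n} (I^{(n-j+1)} + J^{(j)})`.

For `⊆` (`symbPow_tId_le`), write `I^{(a)}` and `J^{(b)}` as intersections of primary components
`U` and `V` at minimal primes `p` of `I` and `q` of `J`. Since `(I + J)^n ⊆ U + V`, it is enough
that a prime consisting of zero divisors on `A ⧸ U ⊗ B ⧸ V` and containing `I + J` is minimal over
`I + J` (`mem_minimalPrimes_of_forall_regMod`). Take a Noether normalization `k[t] ⊆ B ⧸ q`. A
polynomial in `A[t]` with a coefficient outside `p` is regular on `A ⧸ U ⊗ B ⧸ V`, because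
`B ⧸ V` is torsion-free over `k[t]` (`regMod_polyMap`). So such a prime contracts into `p A[t]`;
every smaller prime over `I + J` contains the extensions of `p` and `q`, so it has the same
contraction, and incomparability for integral extensions makes the two equal.

For `⊇` (`partialInf_le`), the modular law rewrites the intersection as
`∑_i I^{(n-i)} J^{(i)}`, using `U ∩ V = U V` for extensions of ideals of `A` and `B`; each product
lies in `(I + J)^{(n)}` since minimal primes of `I + J` contract to minimal primes of `I` and `J`.

The depth of the intersection is then estimated by adding one term at a time. With
`Q_t = ⋂_{j ≤ t} (I^{(n-j+1)} + J^{(j)})`, one has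
`Q_{t+1} + (I^{(n-t-1)} + J^{(t+2)}) = I^{(n-t-1)} + J^{(t+1)}` (`partialInf_sup`), and the depth
lemma for `0 → R ⧸ (U ∩ V) → R ⧸ U × R ⧸ V → R ⧸ (U + V) → 0` (`DepthGE.inf`) applies, together
with the fact that regular sequences on `A ⧸ U` and `B ⧸ V` concatenate (`DepthGE.tId`).
-/

open MvPolynomial TensorProduct

/-- The `n`-th symbolic power of an ideal `Q`:
`Q^{(n)} = ⋂_{P ∈ Min(Q)} (Q^n R_P ∩ R)`, the intersection over the minimal primes `P` of `Q`
of the contractions of `Q^n R_P` along the localization maps `R → R_P`. -/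
noncomputable def symbPow {R : Type*} [CommRing R] (Q : Ideal R) (n : ℕ) : Ideal R :=
  ⨅ (P : Ideal R) (hP : P ∈ Q.minimalPrimes),
    letI : P.IsPrime := hP.1.1
    Ideal.comap (algebraMap R (Localization.AtPrime P))
      (Ideal.map (algebraMap R (Localization.AtPrime P)) (Q ^ n))

/-- The depth of a module `M` with respect to an ideal `m`: the maximal length of an
`M`-regular sequence contained in `m`. -/
noncomputable def idealDepth {R : Type*} [CommRing R] (m : Ideal R)
    (M : Type*) [AddCommGroup M] [Module R M] : ℕ :=
  sSup {n | ∃ rs : List R, rs.length = n ∧ (∀ r ∈ rs, r ∈ m) ∧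
    RingTheory.Sequence.IsRegular M rs}

/-- The maximal homogeneous ideal of a polynomial ring, generated by the variables. -/
noncomputable def maxHomIdeal (k : Type*) [CommSemiring k] (σ : Type*) :
    Ideal (MvPolynomial σ k) :=
  Ideal.span (Set.range X)

/-- An ideal of a polynomial ring is homogeneous if it contains all homogeneous components of
each of its elements. -/
def IsHomogeneousIdeal {k σ : Type*} [CommSemiring k] (I : Ideal (MvPolynomial σ k)) : Prop :=
  ∀ f ∈ I, ∀ d : ℕ, homogeneousComponent d f ∈ I

/-- A monomial ideal: an ideal generated by monomials. -/
def IsMonomialIdeal {k σ : Type*} [CommSemiring k] (I : Ideal (MvPolynomial σ k)) : Prop :=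
  ∃ S : Set (σ →₀ ℕ), I = Ideal.span ((fun s => monomial s (1 : k)) '' S)

/-! ### Grade of cyclic modules, in terms of ideals -/

section Grade

variable {R : Type*} [CommRing R]

/-- The element `x` is a nonzerodivisor on `R ⧸ U`. -/
def RegMod (U : Ideal R) (x : R) : Prop := ∀ f, x * f ∈ U → f ∈ U

/-- `DepthGE m d U`: the ideal `m` contains a weakly regular sequence of length `d` on `R ⧸ U`.
Only cyclic modules occur, so the recursion runs over ideals. -/
def DepthGE (m : Ideal R) : ℕ → Ideal R → Prop
  | 0, _ => True
  | d + 1, U => ∃ x ∈ m, RegMod U x ∧ DepthGE m d (U ⊔ Ideal.span {x})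

lemma mem_sup_span_iff {U : Ideal R} {x f : R} :
    f ∈ U ⊔ Ideal.span {x} ↔ ∃ a, f - a * x ∈ U := by
  constructor
  · intro h
    obtain ⟨u, hu, v, hv, rfl⟩ := Submodule.mem_sup.1 h
    obtain ⟨a, rfl⟩ := Ideal.mem_span_singleton'.1 hv
    exact ⟨a, by simpa using hu⟩
  · rintro ⟨a, ha⟩
    have := Submodule.add_mem_sup ha (Ideal.mul_mem_left _ a (Ideal.mem_span_singleton_self x))
    simpa using this

lemma DepthGE.pred {m : Ideal R} : ∀ {d : ℕ} {U : Ideal R}, DepthGE m (d + 1) U → DepthGE m d U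
  | 0, _, _ => trivial
  | _ + 1, _, ⟨x, hx, hr, h⟩ => ⟨x, hx, hr, h.pred⟩

lemma DepthGE.mono {m U : Ideal R} {d e : ℕ} (h : DepthGE m e U) (hde : d ≤ e) :
    DepthGE m d U := by
  induction hde with
  | refl => exact h
  | step _ ih => exact ih h.pred

lemma not_regMod_iff {U : Ideal R} {x : R} :
    ¬ RegMod U x ↔ ∃ y : R ⧸ U, y ≠ 0 ∧ x • y = 0 := by
  constructor
  · intro h
    simp only [RegMod, not_forall] at h
    obtain ⟨f, hf, hf'⟩ := h
    refine ⟨Ideal.Quotient.mk U f, ?_, ?_⟩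
    · rwa [Ne, Ideal.Quotient.eq_zero_iff_mem]
    · rw [← Ideal.Quotient.eq_zero_iff_mem, map_mul] at hf
      exact hf
  · rintro ⟨y, hy, hxy⟩ h
    obtain ⟨f, rfl⟩ := Ideal.Quotient.mk_surjective y
    rw [Ne, Ideal.Quotient.eq_zero_iff_mem] at hy
    refine hy (h f ?_)
    rw [← Ideal.Quotient.eq_zero_iff_mem, map_mul]
    exact hxy

/-- Prime avoidance applied to the associated primes of the finitely many modules `R ⧸ U i`. -/
lemma exists_common_regMod [IsNoetherianRing R] {ι : Type*} [Finite ι] (m : Ideal R)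
    (U : ι → Ideal R) (h : ∀ i, ∃ x ∈ m, RegMod (U i) x) :
    ∃ x ∈ m, ∀ i, RegMod (U i) x := by
  by_contra! hcon
  have hfin : (⋃ i, associatedPrimes R (R ⧸ U i)).Finite :=
    Set.finite_iUnion fun i => associatedPrimes.finite R (R ⧸ U i)
  have hsub : (m : Set R) ⊆
      ⋃ p ∈ (⋃ i, associatedPrimes R (R ⧸ U i)), ((id p : Ideal R) : Set R) := by
    intro x hx
    obtain ⟨i, hi⟩ := hcon x hx
    have : x ∈ ⋃ p ∈ associatedPrimes R (R ⧸ U i), (p : Set R) := by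
      rw [biUnion_associatedPrimes_eq_zero_divisors]
      exact not_regMod_iff.1 hi
    simp only [Set.mem_iUnion] at this ⊢
    obtain ⟨p, hp, hxp⟩ := this
    exact ⟨p, ⟨i, hp⟩, hxp⟩
  rw [Ideal.subset_union_prime_finite hfin ⊥ ⊥] at hsub
  · obtain ⟨p, hp, hmp⟩ := hsub
    obtain ⟨i, hp⟩ := Set.mem_iUnion.1 hp
    obtain ⟨x, hx, hr⟩ := h i
    have : x ∈ ⋃ p ∈ associatedPrimes R (R ⧸ U i), (p : Set R) :=
      Set.mem_biUnion hp (hmp hx)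
    rw [biUnion_associatedPrimes_eq_zero_divisors] at this
    exact not_regMod_iff.2 this hr
  · intro p hp _ _
    obtain ⟨i, hp⟩ := Set.mem_iUnion.1 hp
    exact hp.isPrime

/-- If `m` consists of zero divisors on `R ⧸ U`, then a single nonzero element of `R ⧸ U` is
killed by `m`. -/
lemma exists_socle [IsNoetherianRing R] (m U : Ideal R) (h : ∀ x ∈ m, ¬ RegMod U x) :
    ∃ v, v ∉ U ∧ ∀ r ∈ m, r * v ∈ U := by
  have hsub : (m : Set R) ⊆ ⋃ p ∈ associatedPrimes R (R ⧸ U), ((id p : Ideal R) : Set R) := by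
    intro x hx
    have := biUnion_associatedPrimes_eq_zero_divisors R (R ⧸ U)
    simp only [id]
    rw [this]
    exact not_regMod_iff.1 (h x hx)
  rw [Ideal.subset_union_prime_finite (associatedPrimes.finite R (R ⧸ U)) ⊥ ⊥] at hsub
  · obtain ⟨p, hp, hmp⟩ := hsub
    have hp' := (isAssociatedPrime_iff.1 hp)
    obtain ⟨hpp, y, hy⟩ := hp'
    obtain ⟨v, rfl⟩ := Ideal.Quotient.mk_surjective y
    have key : ∀ r, r ∈ p ↔ r * v ∈ U := by
      intro r
      rw [hy, Submodule.mem_colon_singleton, ← Ideal.Quotient.eq_zero_iff_mem (I := U), map_mul]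
      rfl
    refine ⟨v, fun hv => hpp.ne_top ?_, fun r hr => (key r).1 (hmp hr)⟩
    rw [Ideal.eq_top_iff_one, key, one_mul]
    exact hv
  · intro p hp _ _
    exact hp.isPrime

lemma RegMod.swap {U : Ideal R} {a z : R} (ha : RegMod U a)
    (hz : RegMod (U ⊔ Ideal.span {a}) z) : RegMod (U ⊔ Ideal.span {z}) a := by
  intro f hf
  obtain ⟨g, hg⟩ := mem_sup_span_iff.1 hf
  have h1 : z * g ∈ U ⊔ Ideal.span {a} :=
    mem_sup_span_iff.2 ⟨f, by convert U.neg_mem hg using 1; ring⟩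
  obtain ⟨h, hh⟩ := mem_sup_span_iff.1 (hz g h1)
  refine mem_sup_span_iff.2 ⟨h, ha _ ?_⟩
  convert U.add_mem hg (U.mul_mem_left z hh) using 1
  ring

/-- Passing to the quotient by any `R ⧸ U`-regular element of `m` lowers the available length of
regular sequences by exactly one. -/
lemma DepthGE.quot [IsNoetherianRing R] {m : Ideal R} {d : ℕ} {U : Ideal R} {x : R}
    (h : DepthGE m (d + 1) U) (hx : x ∈ m) (hr : RegMod U x) :
    DepthGE m d (U ⊔ Ideal.span {x}) := by
  induction d generalizing U x with
  | zero => trivial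
  | succ d ih =>
    obtain ⟨y, hy, hyr, hd⟩ := h
    obtain ⟨y₂, hy₂, hy₂r, hd₂⟩ := hd
    -- If `v` spans a socle element of `R ⧸ (U, x)`, then `y * v ≡ x * w`, and `w` represents
    -- a socle element of `R ⧸ (U, y)`.
    have h1 : ∃ z ∈ m, RegMod (U ⊔ Ideal.span {x}) z := by
      by_contra! hcon
      obtain ⟨v, hv, hmv⟩ := exists_socle m _ hcon
      obtain ⟨w, hw⟩ := mem_sup_span_iff.1 (hmv y hy)
      have h2 : ∀ r ∈ m, r * w ∈ U ⊔ Ideal.span {y} := by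
        intro r hrm
        obtain ⟨g, hg⟩ := mem_sup_span_iff.1 (hmv r hrm)
        refine mem_sup_span_iff.2 ⟨g, hr _ ?_⟩
        convert U.sub_mem (U.mul_mem_left y hg) (U.mul_mem_left r hw) using 1
        ring
      obtain ⟨c, hc⟩ := mem_sup_span_iff.1 (hy₂r w (h2 y₂ hy₂))
      refine hv (mem_sup_span_iff.2 ⟨c, hyr _ ?_⟩)
      convert U.add_mem hw (U.mul_mem_left x hc) using 1
      ring
    obtain ⟨z, hz, hzr⟩ := exists_common_regMod m
      (fun i : Bool => if i then U ⊔ Ideal.span {x} else U ⊔ Ideal.span {y})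
      (by rintro (_ | _); exacts [⟨y₂, hy₂, by simpa using hy₂r⟩, by simpa using h1])
    have hzx : RegMod (U ⊔ Ideal.span {x}) z := by simpa using hzr true
    have hzy : RegMod (U ⊔ Ideal.span {y}) z := by simpa using hzr false
    have h3 := ih (U := U ⊔ Ideal.span {y}) ⟨y₂, hy₂, hy₂r, hd₂⟩ hz hzy
    have h4 : DepthGE m (d + 1) (U ⊔ Ideal.span {z}) :=
      ⟨y, hy, hyr.swap hzy, by rwa [sup_right_comm] at h3⟩
    have h5 := ih h4 hx (hr.swap hzx)
    exact ⟨z, hz, hzx, by rwa [sup_right_comm] at h5⟩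

/-- The depth lemma for `0 → R ⧸ (U ⊓ V) → R ⧸ U × R ⧸ V → R ⧸ (U ⊔ V) → 0`. -/
lemma DepthGE.inf [IsNoetherianRing R] {m : Ideal R} {d : ℕ} {U V : Ideal R}
    (hU : DepthGE m d U) (hV : DepthGE m d V) (hUV : DepthGE m (d - 1) (U ⊔ V)) :
    DepthGE m d (U ⊓ V) := by
  have aux : ∀ {U V : Ideal R} {z : R}, RegMod U z → RegMod V z → RegMod (U ⊓ V) z :=
    fun h1 h2 f hf => ⟨h1 f hf.1, h2 f hf.2⟩
  induction d generalizing U V with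
  | zero => trivial
  | succ d ih =>
    have gU : ∃ x ∈ m, RegMod U x := let ⟨x, hx, hr, _⟩ := hU; ⟨x, hx, hr⟩
    have gV : ∃ x ∈ m, RegMod V x := let ⟨x, hx, hr, _⟩ := hV; ⟨x, hx, hr⟩
    rcases d with _ | d
    · obtain ⟨z, hz, hzr⟩ := exists_common_regMod m (fun i : Bool => if i then U else V)
        (by rintro (_ | _); exacts [by simpa using gV, by simpa using gU])
      exact ⟨z, hz, aux (by simpa using hzr true) (by simpa using hzr false), trivial⟩
    · have gUV : ∃ x ∈ m, RegMod (U ⊔ V) x := let ⟨x, hx, hr, _⟩ := hUV; ⟨x, hx, hr⟩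
      obtain ⟨z, hz, hzr⟩ := exists_common_regMod m (![U, V, U ⊔ V])
        (by intro i; fin_cases i; exacts [gU, gV, gUV])
      have zU : RegMod U z := hzr 0
      have zV : RegMod V z := hzr 1
      have zUV : RegMod (U ⊔ V) z := hzr 2
      refine ⟨z, hz, aux zU zV, ?_⟩
      have heq : U ⊓ V ⊔ Ideal.span {z} = (U ⊔ Ideal.span {z}) ⊓ (V ⊔ Ideal.span {z}) := by
        refine le_antisymm (le_inf (sup_le_sup_right inf_le_left _)
          (sup_le_sup_right inf_le_right _)) ?_
        rintro f ⟨hfU, hfV⟩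
        obtain ⟨a, ha⟩ := mem_sup_span_iff.1 hfU
        obtain ⟨b, hb⟩ := mem_sup_span_iff.1 hfV
        -- `z` is regular modulo `U ⊔ V`, so the two coefficients agree modulo `U ⊔ V`.
        have hab : z * (b - a) ∈ U ⊔ V := by
          convert Submodule.sub_mem _ (Ideal.mem_sup_left ha : f - a * z ∈ U ⊔ V)
            (Ideal.mem_sup_right hb) using 1
          ring
        obtain ⟨u, hu, v, hv, huv⟩ := Submodule.mem_sup.1 (zUV _ hab)
        have e1 : f - (a + u) * z = f - a * z - z * u := by ring
        have e2 : f - (a + u) * z = f - b * z + z * v := by linear_combination -z * huv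
        refine mem_sup_span_iff.2 ⟨a + u, ?_, ?_⟩
        · rw [e1]
          exact U.sub_mem ha (U.mul_mem_left z hu)
        · rw [e2]
          exact V.add_mem hb (V.mul_mem_left z hv)
      rw [heq]
      refine ih (hU.quot hz zU) (hV.quot hz zV) ?_
      rw [← sup_sup_distrib_right]
      exact hUV.quot hz zUV

lemma regMod_iff_isSMulRegular {U : Ideal R} {x : R} : RegMod U x ↔ IsSMulRegular (R ⧸ U) x := by
  rw [isSMulRegular_iff_right_eq_zero_of_smul, ← not_iff_not, not_regMod_iff]
  push Not
  exact exists_congr fun _ => and_comm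

open scoped Pointwise in
lemma depthGE_iff {m : Ideal R} {d : ℕ} {U : Ideal R} :
    DepthGE m d U ↔ ∃ rs : List R, rs.length = d ∧ (∀ r ∈ rs, r ∈ m) ∧
      RingTheory.Sequence.IsWeaklyRegular (R ⧸ U) rs := by
  have key : ∀ (U : Ideal R) (x : R) (rs : List R),
      RingTheory.Sequence.IsWeaklyRegular (R ⧸ U) (x :: rs) ↔
        RegMod U x ∧ RingTheory.Sequence.IsWeaklyRegular (R ⧸ (U ⊔ Ideal.span {x})) rs := by
    intro U x rs
    rw [RingTheory.Sequence.isWeaklyRegular_cons_iff, regMod_iff_isSMulRegular]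
    refine and_congr_right fun _ => ?_
    have h : x • (⊤ : Submodule R (R ⧸ U)) = Submodule.map (Submodule.mkQ U) (Ideal.span {x}) := by
      ext y
      rw [Submodule.mem_smul_pointwise_iff_exists, Submodule.mem_map]
      constructor
      · rintro ⟨y, -, rfl⟩
        obtain ⟨f, rfl⟩ := Submodule.mkQ_surjective _ y
        exact ⟨x * f, Ideal.mul_mem_right _ _ (Ideal.mem_span_singleton_self x), by
          rw [← smul_eq_mul, map_smul]⟩
      · rintro ⟨g, hg, rfl⟩
        obtain ⟨f, rfl⟩ := Ideal.mem_span_singleton'.1 hg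
        exact ⟨U.mkQ f, trivial, by rw [mul_comm, ← smul_eq_mul, map_smul]⟩
    exact ((Submodule.quotEquivOfEq _ _ h).trans
      (Submodule.quotientQuotientEquivQuotientSup U (Ideal.span {x}))).isWeaklyRegular_congr rs
  induction d generalizing U with
  | zero =>
    refine iff_of_true trivial ⟨[], rfl, by simp, RingTheory.Sequence.IsWeaklyRegular.nil _ _⟩
  | succ d ih =>
    constructor
    · rintro ⟨x, hx, hr, h⟩
      obtain ⟨rs, hl, hm, hw⟩ := ih.1 h
      exact ⟨x :: rs, by simp [hl], by simpa using ⟨hx, hm⟩, (key _ _ _).2 ⟨hr, hw⟩⟩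
    · rintro ⟨rs, hl, hm, hw⟩
      obtain ⟨x, rs, rfl⟩ := List.exists_cons_of_length_eq_add_one hl
      obtain ⟨hr, hw⟩ := (key _ _ _).1 hw
      simp only [List.mem_cons, forall_eq_or_imp] at hm
      exact ⟨x, hm.1, hr, ih.2 ⟨rs, by simpa using hl, hm.2, hw⟩⟩

/-- For `U ≤ m ≠ ⊤`, weakly regular sequences in `m` on `R ⧸ U` are automatically regular. -/
lemma idealDepth_eq {m U : Ideal R} (hm : m ≠ ⊤) (hU : U ≤ m) :
    idealDepth m (R ⧸ U) = sSup {d | DepthGE m d U} := by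
  unfold idealDepth
  congr 1
  ext d
  rw [Set.mem_ofPred_eq, Set.mem_ofPred_eq, depthGE_iff]
  refine exists_congr fun rs => and_congr_right fun _ => and_congr_right fun hrs => ?_
  rw [RingTheory.Sequence.isRegular_iff]
  refine and_iff_left fun htop => hm ?_
  have h1 : Ideal.ofList rs ≤ m := Ideal.span_le.2 fun r hr => hrs r hr
  have h2 : (Ideal.Quotient.mk U 1) ∈ (m.map (Ideal.Quotient.mk U)) := by
    have : (Ideal.Quotient.mk U 1) ∈ (Ideal.ofList rs • ⊤ : Submodule R (R ⧸ U)) := by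
      rw [← htop]; trivial
    refine Submodule.smul_induction_on this ?_ fun _ _ => Ideal.add_mem _
    intro r hr y _
    obtain ⟨f, rfl⟩ := Ideal.Quotient.mk_surjective y
    have : r • Ideal.Quotient.mk U f = Ideal.Quotient.mk U (r * f) := by rw [map_mul]; rfl
    rw [this]
    exact Ideal.mem_map_of_mem _ (m.mul_mem_right _ (h1 hr))
  rw [Ideal.mem_quotient_iff_mem hU] at h2
  exact (Ideal.eq_top_iff_one m).2 h2

lemma bddAbove_depthGE [IsNoetherianRing R] {m : Ideal R} (hm : m ≠ ⊤) (U : Ideal R)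
    (hU : U ≤ m) : BddAbove {d | DepthGE m d U} := by
  induction U using IsNoetherian.induction with
  | hgt U ih =>
    by_cases h : ∃ x ∈ m, RegMod U x
    · obtain ⟨x, hx, hr⟩ := h
      have hlt : U < U ⊔ Ideal.span {x} := by
        refine lt_of_le_of_ne le_sup_left fun heq => hm ?_
        have hxU : x ∈ U := heq ▸ Ideal.mem_sup_right (Ideal.mem_span_singleton_self x)
        exact (Ideal.eq_top_iff_one m).2 (hU (hr 1 (by simpa using hxU)))
      obtain ⟨N, hN⟩ := ih _ hlt
        (sup_le hU ((Ideal.span_singleton_le_iff_mem _).2 hx))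
      refine ⟨N + 1, ?_⟩
      rintro (_ | d) hd
      · exact Nat.zero_le _
      · exact Nat.succ_le_succ (hN (DepthGE.quot hd hx hr))
    · refine ⟨0, ?_⟩
      rintro (_ | d) hd
      · exact le_rfl
      · obtain ⟨x, hx, hr, _⟩ := hd
        exact absurd ⟨x, hx, hr⟩ h

lemma depthGE_idealDepth [IsNoetherianRing R] {m U : Ideal R} (hm : m ≠ ⊤) (hU : U ≤ m) :
    DepthGE m (idealDepth m (R ⧸ U)) U := by
  rw [idealDepth_eq hm hU]
  exact Nat.sSup_mem (s := {d | DepthGE m d U}) ⟨0, True.intro⟩ (bddAbove_depthGE hm U hU)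

lemma DepthGE.le_idealDepth [IsNoetherianRing R] {m U : Ideal R} {d : ℕ} (h : DepthGE m d U)
    (hm : m ≠ ⊤) (hU : U ≤ m) : d ≤ idealDepth m (R ⧸ U) := by
  rw [idealDepth_eq hm hU]
  exact le_csSup (bddAbove_depthGE hm U hU) h

end Grade

/-! ### Ideals of a tensor product over a field -/

section Tensor

variable {k : Type*} [Field k] {A B : Type*} [CommRing A] [CommRing B] [Algebra k A] [Algebra k B]

/-- The ideal `U (A ⊗ B) + V (A ⊗ B)`, the kernel of `A ⊗ B → A ⧸ U ⊗ B ⧸ V`. -/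
noncomputable def tId (k : Type*) [Field k] {A B : Type*} [CommRing A] [CommRing B] [Algebra k A]
    [Algebra k B] (U : Ideal A) (V : Ideal B) : Ideal (A ⊗[k] B) :=
  U.map (Algebra.TensorProduct.includeLeft : A →ₐ[k] A ⊗[k] B) ⊔
    V.map (Algebra.TensorProduct.includeRight : B →ₐ[k] A ⊗[k] B)

/-- The slice map `id ⊗ φ : A ⊗ B → A` attached to a linear functional `φ` on `B`. -/
noncomputable def slice (A : Type*) [CommRing A] [Algebra k A] (φ : B →ₗ[k] k) :
    A ⊗[k] B →ₗ[A] A :=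
  (TensorProduct.AlgebraTensorModule.rid k A A).toLinearMap ∘ₗ
    TensorProduct.AlgebraTensorModule.lTensor A A φ

@[simp] lemma slice_tmul (φ : B →ₗ[k] k) (a : A) (b : B) :
    slice A φ (a ⊗ₜ b) = φ b • a := by
  simp [slice]

lemma tId_mono {U U' : Ideal A} {V V' : Ideal B} (hU : U ≤ U') (hV : V ≤ V') :
    tId k U V ≤ tId k U' V' :=
  sup_le_sup (Ideal.map_mono hU) (Ideal.map_mono hV)

lemma tmul_mem_tId_left {U : Ideal A} (V : Ideal B) {a : A} (ha : a ∈ U) (b : B) :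
    a ⊗ₜ[k] b ∈ tId k U V := by
  have : a ⊗ₜ[k] b = (1 ⊗ₜ b) * (a ⊗ₜ 1) := by simp
  rw [this]
  exact Ideal.mul_mem_left _ _ (Ideal.mem_sup_left (Ideal.mem_map_of_mem _ ha))

lemma tmul_mem_tId_right (U : Ideal A) {V : Ideal B} (a : A) {b : B} (hb : b ∈ V) :
    a ⊗ₜ[k] b ∈ tId k U V := by
  have : a ⊗ₜ[k] b = (a ⊗ₜ 1) * (1 ⊗ₜ b) := by simp
  rw [this]
  exact Ideal.mul_mem_left _ _ (Ideal.mem_sup_right (Ideal.mem_map_of_mem _ hb))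

lemma tId_eq_ker (U : Ideal A) (V : Ideal B) :
    tId k U V = RingHom.ker (Algebra.TensorProduct.map (Ideal.Quotient.mkₐ k U)
      (Ideal.Quotient.mkₐ k V)) := by
  rw [Algebra.TensorProduct.map_ker _ _ (Ideal.Quotient.mkₐ_surjective k U)
    (Ideal.Quotient.mkₐ_surjective k V)]
  have h1 : RingHom.ker (Ideal.Quotient.mkₐ k U) = U := Ideal.Quotient.mkₐ_ker k U
  have h2 : RingHom.ker (Ideal.Quotient.mkₐ k V) = V := Ideal.Quotient.mkₐ_ker k V
  rw [h1, h2]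
  rfl

/-- Membership in `U (A ⊗ B) + V (A ⊗ B)` is tested by the slice maps of the functionals that
vanish on `V`, since `B ⧸ V` has a `k`-basis. -/
lemma mem_tId_iff {U : Ideal A} {V : Ideal B} {f : A ⊗[k] B} :
    f ∈ tId k U V ↔ ∀ φ : B →ₗ[k] k, (∀ v ∈ V, φ v = 0) → slice A φ f ∈ U := by
  constructor
  · have hmul : ∀ (φ : B →ₗ[k] k) (a : A) (b : B) (g : A ⊗[k] B),
        slice A φ (a ⊗ₜ b * g) = a * slice A (φ ∘ₗ LinearMap.mulLeft k b) g := by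
      intro φ a b g
      induction g using TensorProduct.induction_on with
      | zero => simp
      | add x y hx hy => rw [mul_add, map_add, map_add, hx, hy, mul_add]
      | tmul x y => simp
    let W : Ideal (A ⊗[k] B) :=
      { carrier := {f | ∀ φ : B →ₗ[k] k, (∀ v ∈ V, φ v = 0) → slice A φ f ∈ U}
        add_mem' := fun hf hg φ hφ => by
          rw [map_add]; exact U.add_mem (hf φ hφ) (hg φ hφ)
        zero_mem' := fun φ _ => by rw [map_zero]; exact U.zero_mem
        smul_mem' := fun c f hf => by
          induction c using TensorProduct.induction_on with
          | zero => intro φ _; rw [zero_smul, map_zero]; exact U.zero_mem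
          | add x y hx hy =>
            intro φ hφ
            rw [add_smul, map_add]
            exact U.add_mem (hx φ hφ) (hy φ hφ)
          | tmul a b =>
            intro φ hφ
            rw [smul_eq_mul, hmul]
            exact U.mul_mem_left _ (hf _ fun v hv => hφ _ (V.mul_mem_left b hv)) }
    suffices h : tId k U V ≤ W from fun hf => h hf
    refine sup_le (Ideal.map_le_iff_le_comap.2 ?_) (Ideal.map_le_iff_le_comap.2 ?_)
    · intro u hu φ _
      simpa using Submodule.smul_of_tower_mem U (φ 1) hu
    · intro v hv φ hφ
      simp [hφ v hv]
  · intro h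
    rw [tId_eq_ker, RingHom.mem_ker]
    let b := Module.Basis.ofVectorSpace k (B ⧸ V)
    apply (b.baseChange (A ⧸ U)).repr.injective
    ext i
    have key : ∀ g : A ⊗[k] B, (b.baseChange (A ⧸ U)).repr
        (Algebra.TensorProduct.map (Ideal.Quotient.mkₐ k U) (Ideal.Quotient.mkₐ k V) g) i =
        Ideal.Quotient.mk U (slice A (b.coord i ∘ₗ (Ideal.Quotient.mkₐ k V).toLinearMap) g) := by
      intro g
      induction g using TensorProduct.induction_on with
      | zero => simp
      | add x y hx hy => simp only [map_add, Finsupp.add_apply, hx, hy]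
      | tmul x y =>
        simp [Module.Basis.baseChange_repr_tmul, Algebra.smul_def]
    rw [key, map_zero, Finsupp.zero_apply, Ideal.Quotient.eq_zero_iff_mem]
    refine h _ fun v hv => ?_
    have : (Ideal.Quotient.mk V) v = 0 := Ideal.Quotient.eq_zero_iff_mem.2 hv
    simp [this]

lemma tId_le_comap_comm (U : Ideal A) (V : Ideal B) :
    tId k U V ≤ (tId k V U).comap (Algebra.TensorProduct.comm k A B) := by
  refine sup_le (Ideal.map_le_iff_le_comap.2 ?_) (Ideal.map_le_iff_le_comap.2 ?_)
  · intro u hu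
    simpa [Ideal.mem_comap] using tmul_mem_tId_right V 1 hu
  · intro v hv
    simpa [Ideal.mem_comap] using tmul_mem_tId_left U hv 1

lemma comm_mem_tId {U : Ideal A} {V : Ideal B} {f : A ⊗[k] B} :
    Algebra.TensorProduct.comm k A B f ∈ tId k V U ↔ f ∈ tId k U V := by
  refine ⟨fun h => ?_, fun h => tId_le_comap_comm U V h⟩
  have := tId_le_comap_comm V U h
  rw [Ideal.mem_comap] at this
  convert this
  exact ((Algebra.TensorProduct.comm k A B).symm_apply_apply f).symm

lemma mem_tId_of_forall_left {ι : Sort*} {U : Ideal A} {V : Ideal B} (W : ι → Ideal A)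
    (hW : ∀ x, (∀ i, x ∈ W i) → x ∈ U) {f : A ⊗[k] B} (hf : ∀ i, f ∈ tId k (W i) V) :
    f ∈ tId k U V :=
  mem_tId_iff.2 fun φ hφ => hW _ fun i => mem_tId_iff.1 (hf i) φ hφ

lemma mem_tId_of_forall_right {ι : Sort*} {U : Ideal A} {V : Ideal B} (W : ι → Ideal B)
    (hW : ∀ x, (∀ i, x ∈ W i) → x ∈ V) {f : A ⊗[k] B} (hf : ∀ i, f ∈ tId k U (W i)) :
    f ∈ tId k U V :=
  comm_mem_tId.1 (mem_tId_of_forall_left W hW fun i => comm_mem_tId.2 (hf i))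

lemma RegMod.tmul_one {U : Ideal A} {a : A} (ha : RegMod U a) (V : Ideal B) :
    RegMod (tId k U V) (a ⊗ₜ 1) := by
  intro f hf
  rw [mem_tId_iff] at hf ⊢
  intro φ hφ
  have h : (a ⊗ₜ[k] (1 : B)) * f = a • f := by rw [Algebra.smul_def]; rfl
  have := hf φ hφ
  rw [h, map_smul] at this
  exact ha _ this

lemma RegMod.one_tmul {V : Ideal B} {b : B} (hb : RegMod V b) (U : Ideal A) :
    RegMod (tId k U V) (1 ⊗ₜ b) := by
  intro f hf
  rw [← comm_mem_tId] at hf ⊢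
  rw [map_mul, Algebra.TensorProduct.comm_tmul] at hf
  exact hb.tmul_one U _ hf

lemma tId_sup_span_left (U : Ideal A) (V : Ideal B) (a : A) :
    tId k (U ⊔ Ideal.span {a}) V = tId k U V ⊔ Ideal.span {a ⊗ₜ 1} := by
  rw [tId, Ideal.map_sup, Ideal.map_span, Set.image_singleton, sup_right_comm]
  rfl

lemma tId_sup_span_right (U : Ideal A) (V : Ideal B) (b : B) :
    tId k U (V ⊔ Ideal.span {b}) = tId k U V ⊔ Ideal.span {1 ⊗ₜ b} := by
  rw [tId, Ideal.map_sup, Ideal.map_span, Set.image_singleton, ← sup_assoc]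
  rfl

/-- Concatenating regular sequences on `A ⧸ U` and `B ⧸ V` gives one on `A ⧸ U ⊗ B ⧸ V`. -/
lemma DepthGE.tId {mA : Ideal A} {mB : Ideal B} {m : Ideal (A ⊗[k] B)}
    (hA : ∀ a ∈ mA, a ⊗ₜ 1 ∈ m) (hB : ∀ b ∈ mB, 1 ⊗ₜ b ∈ m) {d e : ℕ} {U : Ideal A}
    {V : Ideal B} (hU : DepthGE mA d U) (hV : DepthGE mB e V) :
    DepthGE m (d + e) (tId k U V) := by
  induction d generalizing U with
  | zero =>
    rw [zero_add]
    induction e generalizing V with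
    | zero => trivial
    | succ e ih =>
      obtain ⟨y, hy, hr, h⟩ := hV
      exact ⟨1 ⊗ₜ y, hB y hy, hr.one_tmul U, by rw [← tId_sup_span_right]; exact ih h⟩
  | succ d ih =>
    obtain ⟨x, hx, hr, h⟩ := hU
    rw [Nat.add_right_comm]
    exact ⟨x ⊗ₜ 1, hA x hx, hr.tmul_one V, by rw [← tId_sup_span_left]; exact ih h⟩

lemma map_inf_map_le (U : Ideal A) (V : Ideal B) :
    U.map (Algebra.TensorProduct.includeLeft : A →ₐ[k] A ⊗[k] B) ⊓
      V.map (Algebra.TensorProduct.includeRight : B →ₐ[k] A ⊗[k] B) ≤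
    U.map (Algebra.TensorProduct.includeLeft : A →ₐ[k] A ⊗[k] B) *
      V.map (Algebra.TensorProduct.includeRight : B →ₐ[k] A ⊗[k] B) := by
  rintro f ⟨hfU, hfV⟩
  let V' : Submodule k B := V.restrictScalars k
  have h1 : ∃ g : A ⊗[k] V', TensorProduct.AlgebraTensorModule.lTensor A A V'.subtype g = f := by
    have : f ∈ (V.map (Algebra.TensorProduct.includeRight : B →ₐ[k] A ⊗[k] B)).restrictScalars k :=
      hfV
    rw [Ideal.map_includeRight_eq] at this
    exact this
  obtain ⟨g, rfl⟩ := h1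
  have hfU' : TensorProduct.AlgebraTensorModule.lTensor A A V'.subtype g ∈ tId k U (⊥ : Ideal B) :=
    Ideal.mem_sup_left hfU
  rw [mem_tId_iff] at hfU'
  let b := Module.Basis.ofVectorSpace k V'
  let c := b.baseChange A
  -- The coefficients of `g` over a basis of `V` are slices of `f`, hence lie in `U`.
  have hcoef : ∀ i, c.repr g i ∈ U := by
    intro i
    obtain ⟨φ, hφ⟩ := LinearMap.exists_extend (b.coord i)
    have h2 : ∀ g : A ⊗[k] V',
        slice A φ (TensorProduct.AlgebraTensorModule.lTensor A A V'.subtype g) = c.repr g i := by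
      intro g
      induction g using TensorProduct.induction_on with
      | zero => simp
      | add x y hx hy => rw [map_add, map_add, hx, hy, map_add, Finsupp.add_apply]
      | tmul x y =>
        have := LinearMap.congr_fun hφ y
        simp [c, Module.Basis.baseChange_repr_tmul] at this ⊢
        rw [this]
    rw [← h2]
    exact hfU' φ fun v hv => by rw [(Submodule.mem_bot _).1 hv, map_zero]
  rw [← c.linearCombination_repr g, Finsupp.linearCombination_apply, Finsupp.sum, map_sum]
  refine Ideal.sum_mem _ fun i _ => ?_
  have h3 : TensorProduct.AlgebraTensorModule.lTensor A A V'.subtype (c.repr g i • c i) =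
      (c.repr g i ⊗ₜ 1) * (1 ⊗ₜ (b i : B)) := by
    rw [map_smul]
    simp [c, TensorProduct.smul_tmul']
  rw [h3]
  exact Ideal.mul_mem_mul (Ideal.mem_map_of_mem _ (hcoef i)) (Ideal.mem_map_of_mem _ (b i).2)

end Tensor

/-! ### Symbolic powers -/

section Symbolic

variable {R : Type*} [CommRing R]

/-- The contraction to `R` of the extension of `N` to the localization at the prime `P`. -/
def localComp (N P : Ideal R) [hP : P.IsPrime] : Ideal R where
  carrier := {x | ∃ s, s ∉ P ∧ s * x ∈ N}
  add_mem' := by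
    rintro x y ⟨s, hs, hx⟩ ⟨t, ht, hy⟩
    refine ⟨s * t, fun h => (hP.mem_or_mem h).elim hs ht, ?_⟩
    have : s * t * (x + y) = t * (s * x) + s * (t * y) := by ring
    rw [this]
    exact N.add_mem (N.mul_mem_left _ hx) (N.mul_mem_left _ hy)
  zero_mem' := ⟨1, fun h => hP.ne_top ((Ideal.eq_top_iff_one _).2 h), by simp⟩
  smul_mem' := by
    rintro c x ⟨s, hs, hx⟩
    refine ⟨s, hs, ?_⟩
    rw [smul_eq_mul, mul_left_comm]
    exact N.mul_mem_left _ hx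

lemma mem_localComp {N P : Ideal R} [P.IsPrime] {x : R} :
    x ∈ localComp N P ↔ ∃ s, s ∉ P ∧ s * x ∈ N := Iff.rfl

lemma le_localComp (N P : Ideal R) [hP : P.IsPrime] : N ≤ localComp N P := fun x hx =>
  ⟨1, fun h => hP.ne_top ((Ideal.eq_top_iff_one _).2 h), by simpa using hx⟩

lemma regMod_localComp {N P : Ideal R} [hP : P.IsPrime] {s : R} (hs : s ∉ P) :
    RegMod (localComp N P) s := by
  rintro f ⟨t, ht, h⟩
  exact ⟨t * s, fun h => (hP.mem_or_mem h).elim ht hs, by rwa [mul_assoc]⟩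

lemma mem_symbPow {Q : Ideal R} {n : ℕ} {x : R} :
    x ∈ symbPow Q n ↔ ∀ P ∈ Q.minimalPrimes, ∃ s, s ∉ P ∧ s * x ∈ Q ^ n := by
  simp only [symbPow, Ideal.mem_iInf, Ideal.mem_comap]
  refine forall₂_congr fun P hP => ?_
  have : P.IsPrime := hP.1.1
  rw [IsLocalization.algebraMap_mem_map_algebraMap_iff P.primeCompl]
  rfl

lemma mem_symbPow_iff_localComp {Q : Ideal R} {n : ℕ} {x : R} :
    x ∈ symbPow Q n ↔ ∀ P : Q.minimalPrimes, haveI := P.2.1.1; x ∈ localComp (Q ^ n) P.1 := by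
  rw [mem_symbPow, Subtype.forall]
  rfl

lemma symbPow_zero (Q : Ideal R) : symbPow Q 0 = ⊤ := by
  rw [Ideal.eq_top_iff_one, mem_symbPow]
  intro P hP
  exact ⟨1, fun h => hP.1.1.ne_top ((Ideal.eq_top_iff_one _).2 h), by simp⟩

lemma symbPow_anti (Q : Ideal R) {m n : ℕ} (h : m ≤ n) : symbPow Q n ≤ symbPow Q m := by
  intro x hx
  rw [mem_symbPow] at hx ⊢
  intro P hP
  obtain ⟨s, hs, hx⟩ := hx P hP
  exact ⟨s, hs, Ideal.pow_le_pow_right h hx⟩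

lemma symbPow_le_prime {Q P : Ideal R} (hP : P.IsPrime) (hQ : Q ≤ P) {n : ℕ} (hn : n ≠ 0) :
    symbPow Q n ≤ P := by
  intro x hx
  obtain ⟨p, hp, hpP⟩ := Ideal.exists_minimalPrimes_le hQ
  obtain ⟨s, hs, hx⟩ := mem_symbPow.1 hx p hp
  exact hpP ((hp.1.1.mem_or_mem (hp.1.2 (Ideal.pow_le_self hn hx))).resolve_left hs)

/-- An element of a minimal prime `p` of `I` becomes nilpotent modulo `I` in the localization
at `p`. -/
lemma exists_mul_pow_mem_of_mem_minimalPrimes {I p : Ideal R} (hp : p ∈ I.minimalPrimes) {x : R}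
    (hx : x ∈ p) : ∃ w, w ∉ p ∧ ∃ N, w * x ^ N ∈ I := by
  have : p.IsPrime := hp.1.1
  by_contra! hcon
  -- Otherwise the monoid of the `w * x ^ N` is disjoint from `I`, which yields a smaller prime.
  let S : Submonoid R := p.primeCompl ⊔ Submonoid.powers x
  have hdis : Disjoint (I : Set R) (S : Set R) := by
    rw [Set.disjoint_left]
    intro y hy hyS
    obtain ⟨w, hw, z, ⟨N, rfl⟩, rfl⟩ := Submonoid.mem_sup.1 hyS
    exact hcon w hw N hy
  obtain ⟨q, hq, hIq, hqS⟩ := Ideal.exists_le_prime_disjoint I S hdis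
  have hqp : q ≤ p := by
    intro y hy
    by_contra hyp
    exact Set.disjoint_left.1 hqS hy ((le_sup_left : p.primeCompl ≤ S) hyp)
  have := hp.2 ⟨hq, hIq⟩ hqp hx
  exact Set.disjoint_left.1 hqS this
    (Submonoid.mem_sup_right (Submonoid.mem_powers x))

end Symbolic

section MinimalPrimes

variable {k : Type*} [Field k] {A B : Type*} [CommRing A] [CommRing B] [Algebra k A] [Algebra k B]

lemma comap_includeLeft_mem_minimalPrimes {I : Ideal A} {J : Ideal B} {P : Ideal (A ⊗[k] B)}
    (hP : P ∈ (tId k I J).minimalPrimes) :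
    P.comap (Algebra.TensorProduct.includeLeft : A →ₐ[k] A ⊗[k] B) ∈ I.minimalPrimes := by
  have hPp : P.IsPrime := hP.1.1
  set p := P.comap (Algebra.TensorProduct.includeLeft : A →ₐ[k] A ⊗[k] B) with hp
  have hpp : p.IsPrime := Ideal.comap_isPrime _ _
  have hIp : I ≤ p := fun a ha => hP.1.2 (tmul_mem_tId_left J ha 1)
  have hpJ : tId k p J ≤ P :=
    sup_le (Ideal.map_le_iff_le_comap.2 le_rfl) (le_sup_right.trans hP.1.2)
  refine ⟨⟨hpp, hIp⟩, fun q hq _ x hx => ?_⟩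
  obtain ⟨w, hw, N, hN⟩ := exists_mul_pow_mem_of_mem_minimalPrimes hP (x := x ⊗ₜ[k] (1 : B)) hx
  obtain ⟨φ, hφ, hφw⟩ : ∃ φ : B →ₗ[k] k, (∀ v ∈ J, φ v = 0) ∧ slice A φ w ∉ p := by
    by_contra! hcon
    exact hw (hpJ (mem_tId_iff.2 hcon))
  have h1 := mem_tId_iff.1 hN φ hφ
  have h2 : w * (x ⊗ₜ[k] (1 : B)) ^ N = x ^ N • w := by
    rw [Algebra.smul_def, mul_comm]; simp [Algebra.TensorProduct.tmul_pow]
  rw [h2, map_smul, smul_eq_mul] at h1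
  have : q.IsPrime := hq.1
  rcases Ideal.IsPrime.mem_or_mem this (hq.2 h1) with h | h
  · exact this.mem_of_pow_mem _ h
  · exact absurd (‹q ≤ p› h) hφw

lemma comap_includeRight_mem_minimalPrimes {I : Ideal A} {J : Ideal B} {P : Ideal (A ⊗[k] B)}
    (hP : P ∈ (tId k I J).minimalPrimes) :
    P.comap (Algebra.TensorProduct.includeRight : B →ₐ[k] A ⊗[k] B) ∈ J.minimalPrimes := by
  let e := Algebra.TensorProduct.comm k B A
  have he : ∀ f, e f ∈ tId k I J ↔ f ∈ tId k J I := fun f => comm_mem_tId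
  have hP' : P.comap e ∈ (tId k J I).minimalPrimes := by
    have : (tId k J I) = (tId k I J).comap (e : B ⊗[k] A →+* A ⊗[k] B) := by
      ext f; exact (he f).symm
    rw [this, Ideal.comap_minimalPrimes_eq_of_surjective (f := (e : B ⊗[k] A →+* A ⊗[k] B))
      e.surjective]
    exact ⟨P, hP, rfl⟩
  have := comap_includeLeft_mem_minimalPrimes hP'
  convert this using 1
  ext b
  simp [e, Ideal.mem_comap]

/-- Products of symbolic powers lie in the symbolic power of the sum. -/
lemma map_symbPow_mul_le (I : Ideal A) (J : Ideal B) (a b : ℕ) :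
    (symbPow I a).map (Algebra.TensorProduct.includeLeft : A →ₐ[k] A ⊗[k] B) *
      (symbPow J b).map (Algebra.TensorProduct.includeRight : B →ₐ[k] A ⊗[k] B) ≤
    symbPow (tId k I J) (a + b) := by
  rw [Ideal.map, Ideal.map, Ideal.span_mul_span', Ideal.span_le]
  rintro _ ⟨_, ⟨x, hx, rfl⟩, _, ⟨y, hy, rfl⟩, rfl⟩
  rw [SetLike.mem_coe, mem_symbPow]
  intro P hP
  have hPp : P.IsPrime := hP.1.1
  obtain ⟨s, hs, hsx⟩ := mem_symbPow.1 hx _ (comap_includeLeft_mem_minimalPrimes hP)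
  obtain ⟨t, ht, hty⟩ := mem_symbPow.1 hy _ (comap_includeRight_mem_minimalPrimes hP)
  refine ⟨(s ⊗ₜ 1) * (1 ⊗ₜ t), fun h => (hPp.mem_or_mem h).elim hs ht, ?_⟩
  have h1 : (s ⊗ₜ[k] (1 : B)) * ((1 : A) ⊗ₜ[k] t) *
      ((Algebra.TensorProduct.includeLeft : A →ₐ[k] A ⊗[k] B) x *
        (Algebra.TensorProduct.includeRight : B →ₐ[k] A ⊗[k] B) y) =
      (Algebra.TensorProduct.includeLeft : A →ₐ[k] A ⊗[k] B) (s * x) *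
      (Algebra.TensorProduct.includeRight : B →ₐ[k] A ⊗[k] B) (t * y) := by
    simp
  refine (congrArg (· ∈ _) h1).mpr ?_
  rw [pow_add]
  refine Ideal.mul_mem_mul ?_ ?_
  · refine Ideal.pow_right_mono (le_sup_left : _ ≤ tId k I J) a ?_
    rw [← Ideal.map_pow]
    exact Ideal.mem_map_of_mem _ hsx
  · refine Ideal.pow_right_mono (le_sup_right : _ ≤ tId k I J) b ?_
    rw [← Ideal.map_pow]
    exact Ideal.mem_map_of_mem _ hty

end MinimalPrimes

/-! ### Regular elements of `A ⊗ B` -/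

section Regular

/-- If every element of `E` is nilpotent or regular, then a polynomial over `E` with a
non-nilpotent coefficient is regular: discarding the nilpotent coefficients changes it by a
nilpotent, and leaves a polynomial with a regular leading coefficient. -/
lemma mul_eq_zero_of_coeff_not_isNilpotent {E : Type*} [CommRing E] {s : ℕ}
    (hE : ∀ x : E, IsNilpotent x ∨ ∀ y, x * y = 0 → y = 0) {d : MvPolynomial (Fin s) E}
    {m : Fin s →₀ ℕ} (hm : ¬ IsNilpotent (d.coeff m)) {g : MvPolynomial (Fin s) E}
    (hg : d * g = 0) : g = 0 := by
  classical
  let d₀ : MvPolynomial (Fin s) E :=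
    ∑ i ∈ d.support.filter fun i => IsNilpotent (d.coeff i), monomial i (d.coeff i)
  have hd₀ : ∀ i, d₀.coeff i = if IsNilpotent (d.coeff i) then d.coeff i else 0 := by
    intro i
    simp only [d₀, coeff_sum, coeff_monomial, Finset.sum_ite_eq', Finset.mem_filter,
      mem_support_iff]
    by_cases h : d.coeff i = 0 <;> simp [h]
  have hnil : IsNilpotent d₀ := by
    rw [MvPolynomial.isNilpotent_iff]
    intro i
    rw [hd₀]
    split_ifs with h
    · exact h
    · exact IsNilpotent.zero
  have hd₁ : ∀ i, (d - d₀).coeff i = if IsNilpotent (d.coeff i) then 0 else d.coeff i := by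
    intro i
    rw [coeff_sub, hd₀]
    split_ifs <;> simp
  have hne : d - d₀ ≠ 0 := by
    intro h
    have := hd₁ m
    rw [h, if_neg hm, coeff_zero] at this
    exact hm (this ▸ IsNilpotent.zero)
  let μ : MonomialOrder (Fin s) := MonomialOrder.lex
  have hlc : μ.leadingCoeff (d - d₀) ∈ nonZeroDivisors E := by
    have h0 : μ.leadingCoeff (d - d₀) ≠ 0 := by rwa [Ne, μ.leadingCoeff_eq_zero_iff]
    have h1 : μ.leadingCoeff (d - d₀) = (d - d₀).coeff (μ.degree (d - d₀)) := rfl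
    rw [h1, hd₁] at h0 ⊢
    split_ifs at h0 ⊢ with h
    · exact absurd rfl h0
    · rw [mem_nonZeroDivisors_iff_right]
      intro y hy
      exact (hE _).resolve_left h y (by rwa [mul_comm])
  have hreg : ∀ g, (d - d₀) * g = 0 → g = 0 := by
    intro g hg
    have := μ.leadingCoeff_mul_of_left_mem_nonZeroDivisors hlc (g := g)
    by_contra hg0
    rw [hg, μ.leadingCoeff_zero] at this
    have h2 := (mem_nonZeroDivisors_iff.1 hlc).1 _ this.symm
    exact hg0 (μ.leadingCoeff_eq_zero_iff.1 h2)
  obtain ⟨N, hN⟩ := hnil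
  have hpow : ∀ N : ℕ, (d - d₀) ^ N * g = (-d₀) ^ N * g := by
    intro N
    induction N with
    | zero => simp
    | succ N ih =>
      have h3 : (d - d₀) * g = -d₀ * g := by rw [sub_mul, hg]; ring
      rw [pow_succ, mul_assoc, h3, mul_left_comm, ih]; ring
  have hz : (d - d₀) ^ N * g = 0 := by rw [hpow, neg_pow, hN]; simp
  clear hpow hN
  induction N with
  | zero => simpa using hz
  | succ N ih => exact ih (hreg _ (by rwa [← mul_assoc, ← pow_succ']))

lemma flat_tensor_of_isFractionRing (S F D : Type*) [CommRing S] [Field F] [Algebra S F]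
    [IsFractionRing S F] [AddCommGroup D] [Module S D] : Module.Flat S (F ⊗[S] D) := by
  have h1 : Module.Flat S F := IsLocalization.flat F (nonZeroDivisors S)
  have h2 : Module.Free F (F ⊗[S] D) := Module.Free.of_divisionRing F _
  have h3 : Module.Flat F (F ⊗[S] D) := Module.Flat.of_free
  exact Module.Flat.trans S F _

variable {k : Type*} [Field k]

/-- A regular element of `S ⊗ C` stays regular in `D ⊗ C` when `D` is torsion-free over the
domain `S`: embed `D` in a vector space over the fraction field of `S`, which is `S`-flat. -/
lemma mul_eq_zero_of_torsionFree {S C D : Type*} [CommRing S] [IsDomain S] [CommRing C]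
    [CommRing D] [Algebra k S] [Algebra k C] [Algebra k D] [Algebra S D] [IsScalarTower k S D]
    (hD : ∀ (s : S) (x : D), s ≠ 0 → s • x = 0 → x = 0)
    (d : S ⊗[k] C) (hd : ∀ g, d * g = 0 → g = 0) (g : D ⊗[k] C)
    (hg : Algebra.TensorProduct.map (IsScalarTower.toAlgHom k S D) (AlgHom.id k C) d * g = 0) :
    g = 0 := by
  let F := FractionRing S
  let μ : S ⊗[k] C →ₗ[S] S ⊗[k] C := LinearMap.mulLeft S d
  have hμ : Function.Injective μ := by
    rw [injective_iff_map_eq_zero]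
    exact hd
  let ι : D →ₗ[S] F ⊗[S] D := TensorProduct.mk S F D 1
  have hι : Function.Injective ι := by
    rw [injective_iff_map_eq_zero]
    intro x hx
    have : IsLocalizedModule (nonZeroDivisors S) ι := inferInstance
    obtain ⟨c, hc⟩ := (IsLocalizedModule.eq_zero_iff (nonZeroDivisors S) ι).1 hx
    exact hD c x (nonZeroDivisors.ne_zero c.2) hc
  have hflat : Module.Flat S (F ⊗[S] D) := flat_tensor_of_isFractionRing S F D
  have hinj : Function.Injective (LinearMap.lTensor D μ) := by
    have h1 : Function.Injective (LinearMap.rTensor (S ⊗[k] C) ι) :=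
      Module.Flat.rTensor_preserves_injective_linearMap _ hι
    have h2 : Function.Injective (LinearMap.lTensor (F ⊗[S] D) μ) :=
      Module.Flat.lTensor_preserves_injective_linearMap _ hμ
    have h3 : LinearMap.rTensor (S ⊗[k] C) ι ∘ₗ LinearMap.lTensor D μ =
        LinearMap.lTensor (F ⊗[S] D) μ ∘ₗ LinearMap.rTensor (S ⊗[k] C) ι := by
      rw [LinearMap.lTensor_comp_rTensor, LinearMap.rTensor_comp_lTensor]
    have h4 : Function.Injective (LinearMap.rTensor (S ⊗[k] C) ι ∘ₗ LinearMap.lTensor D μ) := by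
      rw [h3]; exact h2.comp h1
    exact Function.Injective.of_comp h4
  let e := TensorProduct.AlgebraTensorModule.cancelBaseChange k S D D C
  have key : ∀ (z : S ⊗[k] C) (y : D ⊗[S] (S ⊗[k] C)),
      e (LinearMap.lTensor D (LinearMap.mulLeft S z) y) =
      Algebra.TensorProduct.map (IsScalarTower.toAlgHom k S D) (AlgHom.id k C) z * e y := by
    intro z y
    induction y using TensorProduct.induction_on with
    | zero => simp
    | add x y hx hy => simp only [map_add, hx, hy, mul_add]
    | tmul x y =>
      induction y using TensorProduct.induction_on with
      | zero => simp
      | add u v hu hv => rw [TensorProduct.tmul_add, map_add, map_add, hu, hv, map_add, mul_add]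
      | tmul u v =>
        induction z using TensorProduct.induction_on with
        | zero => simp
        | add z z' hz hz' =>
          simp only [LinearMap.lTensor_tmul, LinearMap.mulLeft_apply, add_mul,
            TensorProduct.tmul_add, map_add] at hz hz' ⊢
          rw [hz, hz']
        | tmul z c =>
          simp [e, Algebra.smul_def, mul_assoc]
  have h5 : LinearMap.lTensor D μ (e.symm g) = 0 := by
    apply e.injective
    rw [key, e.apply_symm_apply, hg, map_zero]
  have h6 : e.symm g = 0 := hinj (by rw [h5, map_zero])
  simpa using h6

end Regular

/-! ### The symbolic powers of a sum of ideals -/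

section Sum

variable {k : Type*} [Field k] {A B : Type*} [CommRing A] [CommRing B] [Algebra k A] [Algebra k B]

/-- The map `A[X₁, …, Xₛ] → A ⊗ B` sending `Xᵢ` to `1 ⊗ tᵢ`. -/
noncomputable def polyMap (k A : Type*) [Field k] {B : Type*} [CommRing A] [CommRing B]
    [Algebra k A] [Algebra k B] {s : ℕ} (t : Fin s → B) :
    MvPolynomial (Fin s) A →ₐ[A] A ⊗[k] B :=
  aeval fun i => (1 : A) ⊗ₜ[k] t i

lemma polyMap_C {s : ℕ} (t : Fin s → B) (a : A) : polyMap k A t (C a) = a ⊗ₜ 1 := by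
  simp [polyMap]

lemma polyMap_map {s : ℕ} (t : Fin s → B) (g : MvPolynomial (Fin s) k) :
    polyMap k A t (map (algebraMap k A) g) = 1 ⊗ₜ aeval t g := by
  induction g using MvPolynomial.induction_on with
  | C a =>
    rw [map_C, polyMap_C, aeval_C, Algebra.algebraMap_eq_smul_one, Algebra.algebraMap_eq_smul_one,
      TensorProduct.smul_tmul]
  | add p q hp hq => simp only [map_add, hp, hq, TensorProduct.tmul_add]
  | mul_X p i hp => rw [map_mul, map_mul, hp]; simp [polyMap]

/-- If `U` is `p`-primary and `tᵢ` are algebraically independent modulo `q`, whose complement is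
regular on `B ⧸ V`, then a polynomial in the `tᵢ` with some coefficient outside `p` is regular on
`A ⧸ U ⊗ B ⧸ V`. -/
lemma regMod_polyMap {U p : Ideal A} {V q : Ideal B} (hU : ∀ x, x ∉ p → RegMod U x)
    (hUp : ∀ x ∈ p, ∃ N : ℕ, x ^ N ∈ U) (hV : ∀ y, y ∉ q → RegMod V y) {s : ℕ} {t : Fin s → B}
    (ht : ∀ g : MvPolynomial (Fin s) k, aeval t g ∈ q → g = 0) {d : MvPolynomial (Fin s) A}
    {m : Fin s →₀ ℕ} (hm : d.coeff m ∉ p) (hUtop : U ≤ p) :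
    RegMod (tId k U V) (polyMap k A t d) := by
  let S := MvPolynomial (Fin s) k
  let E := A ⧸ U
  let D := B ⧸ V
  let τ : S →ₐ[k] D := (Ideal.Quotient.mkₐ k V).comp (aeval t)
  let _ : Algebra S D := τ.toRingHom.toAlgebra
  have hτ : ∀ g : S, algebraMap S D g = Ideal.Quotient.mk V (aeval t g) := fun g => rfl
  have : IsScalarTower k S D := IsScalarTower.of_algebraMap_eq fun x => (τ.commutes x).symm
  let δ : MvPolynomial (Fin s) A → S ⊗[k] E := fun d =>
    Algebra.TensorProduct.comm k E S
      ((algebraTensorAlgEquiv k E).symm (map (Ideal.Quotient.mk U) d))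
  let π : A ⊗[k] B →ₐ[k] D ⊗[k] E := (Algebra.TensorProduct.comm k E D).toAlgHom.comp
    (Algebra.TensorProduct.map (Ideal.Quotient.mkₐ k U) (Ideal.Quotient.mkₐ k V))
  have hπ : ∀ f, π f = 0 ↔ f ∈ tId k U V := by
    intro f
    rw [tId_eq_ker, RingHom.mem_ker]
    exact (Algebra.TensorProduct.comm k E D).map_eq_zero_iff
  have key : ∀ d, π (polyMap k A t d) =
      Algebra.TensorProduct.map (IsScalarTower.toAlgHom k S D) (AlgHom.id k E) (δ d) := by
    intro d
    induction d using MvPolynomial.induction_on with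
    | C a =>
      have : (algebraTensorAlgEquiv k E).symm (C (Ideal.Quotient.mk U a) : MvPolynomial (Fin s) E)
          = Ideal.Quotient.mk U a ⊗ₜ 1 := by
        rw [C_apply, algebraTensorAlgEquiv_symm_monomial]; rfl
      rw [polyMap_C]
      simp only [δ, map_C, this]
      simp [π]
      rfl
    | add p q hp hq =>
      simp only [map_add, hp, hq, δ]
    | mul_X p i hp =>
      have h1 : π (polyMap k A t (X i)) =
          Algebra.TensorProduct.map (IsScalarTower.toAlgHom k S D) (AlgHom.id k E) (δ (X i)) := by
        simp only [δ, map_X, algebraTensorAlgEquiv_symm_X]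
        simp [π, polyMap, hτ]
        rfl
      have h2 : δ (p * X i) = δ p * δ (X i) := by simp only [δ, map_mul]
      rw [h2, map_mul, map_mul, map_mul, hp, h1]
  intro f hf
  rw [← hπ, map_mul, key] at hf
  rw [← hπ]
  refine mul_eq_zero_of_torsionFree ?_ (δ d) ?_ _ hf
  · intro g x hg hx
    obtain ⟨y, rfl⟩ := Ideal.Quotient.mk_surjective x
    rw [Algebra.smul_def, hτ, ← map_mul, Ideal.Quotient.eq_zero_iff_mem] at hx
    exact Ideal.Quotient.eq_zero_iff_mem.2 (hV _ (fun h => hg (ht g h)) _ hx)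
  · intro g hg
    let ε := (Algebra.TensorProduct.comm k E S).symm.trans
      ((algebraTensorAlgEquiv (σ := Fin s) k E).restrictScalars k)
    have h1 : ε (δ d) = map (Ideal.Quotient.mk U) d := by
      simp [ε, δ]
    have h2 : map (Ideal.Quotient.mk U) d * ε g = 0 := by rw [← h1, ← map_mul, hg, map_zero]
    refine (map_eq_zero_iff ε ε.injective).1
      (mul_eq_zero_of_coeff_not_isNilpotent (m := m) ?_ ?_ h2)
    · intro x
      obtain ⟨x, rfl⟩ := Ideal.Quotient.mk_surjective x
      by_cases hx : x ∈ p
      · obtain ⟨N, hN⟩ := hUp x hx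
        exact .inl ⟨N, by rw [← map_pow]; exact Ideal.Quotient.eq_zero_iff_mem.2 hN⟩
      · refine .inr fun y hy => ?_
        obtain ⟨y, rfl⟩ := Ideal.Quotient.mk_surjective y
        rw [← map_mul, Ideal.Quotient.eq_zero_iff_mem] at hy
        exact Ideal.Quotient.eq_zero_iff_mem.2 (hU x hx y hy)
    · rintro ⟨N, hN⟩
      rw [coeff_map, ← map_pow, Ideal.Quotient.eq_zero_iff_mem] at hN
      have hreg : ∀ N : ℕ, d.coeff m ^ N ∈ U → (1 : A) ∈ U := by
        intro N
        induction N with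
        | zero => simp
        | succ N ih => exact fun h => ih (hU _ hm _ (by rwa [← pow_succ']))
      exact hm ((Ideal.eq_top_iff_one _).2 (hUtop (hreg N hN)) ▸ Submodule.mem_top)

/-- Let `U` be primary to the minimal prime `p` of `I`, and let the zero divisors on `B ⧸ V` lie
in the minimal prime `q` of `J`. A prime `P ⊇ I + J` containing no regular element on
`A ⧸ U ⊗ B ⧸ V` is minimal over `I + J`: both `P` and any prime over `I + J` below it contract to
`p A[t]` in `A[t]`, where `k[t] ⊆ B ⧸ q` is a Noether normalization, and `A ⊗ B ⧸ q` is integral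
over `A[t]`. -/
lemma mem_minimalPrimes_of_forall_regMod [Algebra.FiniteType k B] {I p U : Ideal A}
    {J q V : Ideal B} (hp : p ∈ I.minimalPrimes) (hq : q ∈ J.minimalPrimes)
    (hU : ∀ x, x ∉ p → RegMod U x) (hUp : ∀ x ∈ p, ∃ N : ℕ, x ^ N ∈ U) (hUtop : U ≤ p)
    (hV : ∀ y, y ∉ q → RegMod V y) {P : Ideal (A ⊗[k] B)} (hP : P.IsPrime)
    (hIJP : tId k I J ≤ P) (hW : ∀ w ∈ P, ¬ RegMod (tId k U V) w) :
    P ∈ (tId k I J).minimalPrimes := by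
  have hpp : p.IsPrime := hp.1.1
  have hqp : q.IsPrime := hq.1.1
  refine ⟨⟨hP, hIJP⟩, fun P' hP' hle => ?_⟩
  have hP'p : P'.IsPrime := hP'.1
  -- Both contractions of `P'` contain, hence equal, the given minimal primes.
  have hpP' : p ≤ P'.comap (Algebra.TensorProduct.includeLeft : A →ₐ[k] A ⊗[k] B) := by
    refine hp.2 ⟨Ideal.comap_isPrime _ _, fun x hx => hP'.2 (tmul_mem_tId_left J hx 1)⟩ ?_
    intro x hx
    by_contra hxp
    exact hW _ (hle hx) ((hU x hxp).tmul_one V)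
  have hqP' : q ≤ P'.comap (Algebra.TensorProduct.includeRight : B →ₐ[k] A ⊗[k] B) := by
    refine hq.2 ⟨Ideal.comap_isPrime _ _, fun x hx => hP'.2 (tmul_mem_tId_right I 1 hx)⟩ ?_
    intro x hx
    by_contra hxq
    exact hW _ (hle hx) ((hV x hxq).one_tmul U)
  obtain ⟨s, g, hginj, hgint⟩ := exists_integral_inj_algHom_of_fg k (B ⧸ q)
  choose t ht using fun i => Ideal.Quotient.mk_surjective (I := q) (g (X i))
  have hg : g = (Ideal.Quotient.mkₐ k q).comp (aeval t) := by
    ext i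
    simp [ht]
  have ht0 : ∀ h : MvPolynomial (Fin s) k, aeval t h ∈ q → h = 0 := by
    intro h hh
    apply hginj
    rw [hg, map_zero]
    exact Ideal.Quotient.eq_zero_iff_mem.2 hh
  let Ψ : MvPolynomial (Fin s) A →+* A ⊗[k] B := (polyMap k A t).toRingHom
  have hcomap : P.comap Ψ ≤ P'.comap Ψ := by
    intro d hd
    have hcoef : d ∈ p.map (C : A →+* MvPolynomial (Fin s) A) := by
      rw [MvPolynomial.mem_map_C_iff]
      intro m
      by_contra hm
      exact hW _ hd (regMod_polyMap hU hUp hV ht0 hm hUtop)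
    have h1 : p.map (C : A →+* MvPolynomial (Fin s) A) ≤ P'.comap Ψ := by
      rw [Ideal.map_le_iff_le_comap]
      intro a ha
      have : Ψ (C a) = a ⊗ₜ 1 := polyMap_C t a
      rw [Ideal.mem_comap, Ideal.mem_comap, this]
      exact hpP' ha
    exact h1 hcoef
  -- The quotient by `P'` is integral over the polynomial ring.
  let θ : MvPolynomial (Fin s) A →+* (A ⊗[k] B) ⧸ P' := (Ideal.Quotient.mk P').comp Ψ
  have hintegral : ∀ f : A ⊗[k] B, θ.IsIntegralElem (Ideal.Quotient.mk P' f) := by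
    intro f
    induction f using TensorProduct.induction_on with
    | zero => rw [map_zero]; exact θ.isIntegralElem_zero
    | add x y hx hy => rw [map_add]; exact hx.add θ hy
    | tmul a b =>
      have h1 : a ⊗ₜ[k] b = Ψ (C a) * (1 ⊗ₜ b) := by
        have : Ψ (C a) = a ⊗ₜ 1 := polyMap_C t a
        rw [this]; simp
      rw [h1, map_mul]
      refine RingHom.IsIntegralElem.mul θ (θ.isIntegralElem_map (x := C a)) ?_
      let η : B ⧸ q →+* (A ⊗[k] B) ⧸ P' :=
        Ideal.quotientMap P' ((Algebra.TensorProduct.includeRight : B →ₐ[k] A ⊗[k] B) :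
          B →+* A ⊗[k] B) hqP'
      let ρ : MvPolynomial (Fin s) k →+* MvPolynomial (Fin s) A := map (algebraMap k A)
      have h2 : η.comp g.toRingHom = θ.comp ρ := by
        refine RingHom.ext fun h => ?_
        have h3 : Ψ (ρ h) = 1 ⊗ₜ aeval t h := polyMap_map t h
        have h4 : η (g h) = Ideal.Quotient.mk P' (1 ⊗ₜ aeval t h) := by rw [hg]; rfl
        exact h4.trans (congrArg (Ideal.Quotient.mk P') h3.symm)
      obtain ⟨r, hr, hr0⟩ := hgint (Ideal.Quotient.mk q b)
      refine ⟨r.map ρ, hr.map _, ?_⟩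
      have h3 : η (Ideal.Quotient.mk q b) = Ideal.Quotient.mk P' (1 ⊗ₜ b) := rfl
      rw [Polynomial.eval₂_map, ← h2, ← h3, ← Polynomial.hom_eval₂]
      exact (congrArg η hr0).trans (map_zero η)
  by_contra hnot
  obtain ⟨r, hrP, hrP'⟩ := SetLike.not_le_iff_exists.1 hnot
  obtain ⟨Q, hQ, hQ0⟩ := hintegral r
  have hlt := Ideal.comap_lt_comap_of_root_mem_sdiff (f := Ψ) hle ⟨hrP, hrP'⟩ (p := Q)
    (Polynomial.map_monic_ne_zero hQ) (by
      rw [← Ideal.Quotient.eq_zero_iff_mem, Polynomial.hom_eval₂]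
      exact hQ0)
  exact hlt.not_ge hcomap

lemma exists_pow_mem_localComp {I p : Ideal A} [hp : p.IsPrime] (hpI : p ∈ I.minimalPrimes)
    (a : ℕ) {x : A} (hx : x ∈ p) : ∃ N : ℕ, x ^ N ∈ localComp (I ^ a) p := by
  obtain ⟨w, hw, N, hN⟩ := exists_mul_pow_mem_of_mem_minimalPrimes hpI hx
  refine ⟨N * a, w ^ a, fun h => hw (hp.mem_of_pow_mem _ h), ?_⟩
  rw [pow_mul, ← mul_pow]
  exact Ideal.pow_mem_pow hN a

lemma localComp_pow_le {I p : Ideal A} [hp : p.IsPrime] (hI : I ≤ p) {a : ℕ} (ha : a ≠ 0) :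
    localComp (I ^ a) p ≤ p := by
  rintro x ⟨s, hs, hx⟩
  exact (hp.mem_or_mem (hI (Ideal.pow_le_self ha hx))).resolve_left hs

lemma tId_pow_le (I : Ideal A) (J : Ideal B) {a b n : ℕ} (h : n + 1 = a + b) :
    (tId k I J) ^ n ≤ tId k (I ^ a) (J ^ b) := by
  rw [tId, ← Ideal.add_eq_sup, add_pow, Ideal.sum_eq_sup]
  refine Finset.sup_le fun i hi => Ideal.mul_le_left.trans ?_
  rw [tId, Ideal.map_pow, Ideal.map_pow]
  have := Finset.mem_range.1 hi
  rcases le_or_gt a i with h' | h'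
  · exact le_sup_of_le_left (Ideal.mul_le_left.trans (Ideal.pow_le_pow_right h'))
  · exact le_sup_of_le_right (Ideal.mul_le_right.trans (Ideal.pow_le_pow_right (by omega)))

/-- If `a + b = n + 1` then `(I + J)^{(n)} ⊆ I^{(a)} + J^{(b)}`: every associated prime of
`A ⧸ U ⊗ B ⧸ V`, for primary components `U` of `I^{(a)}` and `V` of `J^{(b)}`, is minimal over
`I + J`. -/
lemma symbPow_tId_le [Algebra.FiniteType k B] (I : Ideal A) (J : Ideal B) {a b n : ℕ}
    (ha : a ≠ 0) (h : n + 1 = a + b) :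
    symbPow (tId k I J) n ≤ tId k (symbPow I a) (symbPow J b) := by
  intro f hf
  refine mem_tId_of_forall_left
    (fun p : I.minimalPrimes => have := p.2.1.1; localComp (I ^ a) p.1)
    (fun x => mem_symbPow_iff_localComp.2) fun ⟨p, hp⟩ => ?_
  refine mem_tId_of_forall_right
    (fun q : J.minimalPrimes => have := q.2.1.1; localComp (J ^ b) q.1)
    (fun x => mem_symbPow_iff_localComp.2) fun ⟨q, hq⟩ => ?_
  have hpp : p.IsPrime := hp.1.1
  have hqp : q.IsPrime := hq.1.1
  let U := localComp (I ^ a) p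
  let V := localComp (J ^ b) q
  change f ∈ tId k U V
  have hU : tId k I J ^ n ≤ tId k U V :=
    (tId_pow_le I J h).trans (tId_mono (le_localComp _ _) (le_localComp _ _))
  by_contra hfK
  let W : Submonoid (A ⊗[k] B) :=
    { carrier := {w | RegMod (tId k U V) w}
      one_mem' := fun g hg => by simpa using hg
      mul_mem' := fun {x y} hx hy g hg => hy _ (hx _ (by rwa [← mul_assoc])) }
  let N : Ideal (A ⊗[k] B) := Submodule.comap (LinearMap.toSpanSingleton _ _ f) (tId k U V)
  have hN : ∀ w, w ∈ N ↔ w * f ∈ tId k U V := fun w => Iff.rfl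
  have hdis : Disjoint (N : Set (A ⊗[k] B)) W := by
    rw [Set.disjoint_left]
    exact fun w hwN hwW => hfK (hwW f hwN)
  obtain ⟨P, hP, hNP, hPW⟩ := Ideal.exists_le_prime_disjoint N W hdis
  have hIJP : tId k I J ≤ P := by
    intro x hx
    refine hP.mem_of_pow_mem n (hNP ((hN _).2 ?_))
    exact Ideal.mul_mem_right _ _ (hU (Ideal.pow_mem_pow hx n))
  have hPmin : P ∈ (tId k I J).minimalPrimes :=
    mem_minimalPrimes_of_forall_regMod (U := U) (V := V) hp hq (fun x hx => regMod_localComp hx)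
      (fun x hx => exists_pow_mem_localComp hp a hx) (localComp_pow_le hp.1.2 ha)
      (fun x hx => regMod_localComp hx) hP hIJP
      (fun w hw hw' => Set.disjoint_left.1 hPW hw hw')
  obtain ⟨s, hs, hsf⟩ := mem_symbPow.1 hf P hPmin
  exact hs (hNP ((hN s).2 (hU hsf)))

/-- The intersection `⋂_{1 ≤ j ≤ t} (I^{(n-j+1)} + J^{(j)})`. -/
noncomputable def partialInf (k : Type*) [Field k] {A B : Type*} [CommRing A] [CommRing B]
    [Algebra k A] [Algebra k B] (I : Ideal A) (J : Ideal B) (n : ℕ) : ℕ → Ideal (A ⊗[k] B)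
  | 0 => ⊤
  | t + 1 => partialInf k I J n t ⊓ tId k (symbPow I (n - t)) (symbPow J (t + 1))

lemma mem_partialInf {I : Ideal A} {J : Ideal B} {n t : ℕ} {f : A ⊗[k] B} :
    f ∈ partialInf k I J n t ↔ ∀ j < t, f ∈ tId k (symbPow I (n - j)) (symbPow J (j + 1)) := by
  induction t with
  | zero => simp [partialInf]
  | succ t ih =>
    rw [partialInf, Ideal.mem_inf, ih, Nat.forall_lt_succ_right]

/-- By the modular law, an element of the intersection is a sum of products from
`I^{(n-i)} J^{(i)}`, `i < t`, up to an element of `J^{(t)}`. -/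
lemma partialInf_le [Algebra.FiniteType k B] (I : Ideal A) (J : Ideal B) {n t : ℕ} (ht : t ≤ n) :
    partialInf k I J n t ≤ symbPow (tId k I J) n ⊔
      (symbPow J t).map (Algebra.TensorProduct.includeRight : B →ₐ[k] A ⊗[k] B) := by
  induction t with
  | zero =>
    rw [symbPow_zero, Ideal.map_top, sup_top_eq]
    exact le_top
  | succ t ih =>
    rintro f ⟨hf, hft⟩
    -- `f = g + v` with `v` from `J^{(t)}`, and `v = u + v'` with `u` from `I^{(n-t)}`, `v'` from
    -- `J^{(t+1)}`; then `u = v - v'` lies in both extensions, hence in their product.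
    obtain ⟨g, hg, v, hv, rfl⟩ := Submodule.mem_sup.1 (ih (by omega) hf)
    have hgt := symbPow_tId_le I J (a := n - t) (b := t + 1) (by omega) (by omega) hg
    have hvt : v ∈ tId k (symbPow I (n - t)) (symbPow J (t + 1)) := by
      simpa using Ideal.sub_mem _ hft hgt
    obtain ⟨u, hu, v', hv', rfl⟩ := Submodule.mem_sup.1 hvt
    have hle := Ideal.map_mono (f := (Algebra.TensorProduct.includeRight : B →ₐ[k] A ⊗[k] B))
      (symbPow_anti J (Nat.le_succ t))
    have huJ : u ∈ (symbPow J t).map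
        (Algebra.TensorProduct.includeRight : B →ₐ[k] A ⊗[k] B) := by
      simpa using Ideal.sub_mem _ hv (hle hv')
    have hun := map_symbPow_mul_le I J _ _ (map_inf_map_le _ _ ⟨hu, huJ⟩)
    rw [show n - t + t = n by omega] at hun
    rw [← add_assoc]
    exact Submodule.add_mem_sup (Ideal.add_mem _ hg hun) hv'

/-- The symbolic power of a sum as an intersection of sums of symbolic powers. -/
lemma symbPow_tId_eq [Algebra.FiniteType k B] (I : Ideal A) (J : Ideal B) (n : ℕ) :
    symbPow (tId k I J) n = partialInf k I J n n := by
  refine le_antisymm (fun f hf => mem_partialInf.2 fun j hj => ?_)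
    ((partialInf_le I J le_rfl).trans (sup_le le_rfl ?_))
  · exact symbPow_tId_le I J (by omega) (by omega) hf
  · have := map_symbPow_mul_le (k := k) I J 0 n
    rwa [symbPow_zero, Ideal.map_top, Ideal.top_mul, zero_add] at this

lemma partialInf_sup (I : Ideal A) (J : Ideal B) (n t : ℕ) :
    partialInf k I J n (t + 1) ⊔ tId k (symbPow I (n - (t + 1))) (symbPow J (t + 2)) =
      tId k (symbPow I (n - (t + 1))) (symbPow J (t + 1)) := by
  refine le_antisymm (sup_le ?_ ?_) (sup_le ?_ ?_)
  · exact inf_le_right.trans (tId_mono (symbPow_anti I (by omega)) le_rfl)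
  · exact tId_mono le_rfl (symbPow_anti J (by omega))
  · exact le_sup_left.trans le_sup_right
  · refine le_trans (fun f hf => mem_partialInf.2 fun j hj => ?_) le_sup_left
    exact Ideal.mem_sup_right (Ideal.map_mono (symbPow_anti J (by omega)) hf)

/-- The depth bound in `A ⊗ B`, by attaching one term of the intersection at a time. -/
lemma depthGE_symbPow_tId [Algebra.FiniteType k B] [IsNoetherianRing (A ⊗[k] B)]
    {mA : Ideal A} {mB : Ideal B} {m : Ideal (A ⊗[k] B)}
    (hmA : ∀ a ∈ mA, a ⊗ₜ 1 ∈ m) (hmB : ∀ b ∈ mB, 1 ⊗ₜ b ∈ m) {I : Ideal A} {J : Ideal B}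
    {dA dB : ℕ → ℕ} (hA : ∀ a, 1 ≤ a → DepthGE mA (dA a) (symbPow I a))
    (hB : ∀ b, 1 ≤ b → DepthGE mB (dB b) (symbPow J b)) {n d : ℕ} (hn : 1 ≤ n)
    (h1 : ∀ i, 1 ≤ i → i ≤ n - 1 → d ≤ dA (n - i) + dB i + 1)
    (h2 : ∀ j, 1 ≤ j → j ≤ n → d ≤ dA (n - j + 1) + dB j) :
    DepthGE m d (symbPow (tId k I J) n) := by
  have hterm : ∀ t, t < n → DepthGE m d (tId k (symbPow I (n - t)) (symbPow J (t + 1))) := by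
    intro t ht
    have := h2 (t + 1) (by omega) (by omega)
    rw [show n - (t + 1) + 1 = n - t by omega] at this
    exact ((hA (n - t) (by omega)).tId hmA hmB (hB (t + 1) (by omega))).mono this
  have hind : ∀ t, t < n → DepthGE m d (partialInf k I J n (t + 1)) := by
    intro t
    induction t with
    | zero => intro _; simpa [partialInf] using hterm 0 hn
    | succ t ih =>
      intro ht
      refine DepthGE.inf (ih (by omega)) (hterm (t + 1) ht) ?_
      rw [partialInf_sup]
      have := h1 (t + 1) (by omega) (by omega)
      exact ((hA (n - (t + 1)) (by omega)).tId hmA hmB (hB (t + 1) (by omega))).mono (by omega)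
  have := hind (n - 1) (by omega)
  rwa [show n - 1 + 1 = n by omega, ← symbPow_tId_eq] at this

end Sum

/-! ### Polynomial rings -/

section Transfer

variable {R S : Type*} [CommRing R] [CommRing S]

lemma DepthGE.map_equiv (e : R ≃+* S) {m : Ideal R} {d : ℕ} {U : Ideal R} (h : DepthGE m d U) :
    DepthGE (m.map (e : R →+* S)) d (U.map (e : R →+* S)) := by
  induction d generalizing U with
  | zero => trivial
  | succ d ih =>
    obtain ⟨x, hx, hr, h⟩ := h
    refine ⟨e x, Ideal.mem_map_of_mem (e : R →+* S) hx, fun f hf => ?_, ?_⟩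
    · rw [Ideal.map_comap_of_equiv, Ideal.mem_comap] at hf ⊢
      exact hr _ (by simpa using hf)
    · have := ih h
      rwa [Ideal.map_sup, Ideal.map_span, Set.image_singleton] at this

lemma symbPow_map_equiv (e : R ≃+* S) (Q : Ideal R) (n : ℕ) :
    symbPow (Q.map (e : R →+* S)) n = (symbPow Q n).map (e : R →+* S) := by
  have hsurj : Function.Surjective (e.symm : S →+* R) := e.symm.surjective
  have hQ : (Q.map (e : R →+* S)).minimalPrimes =
      Ideal.comap (e.symm : S →+* R) '' Q.minimalPrimes := by
    rw [Ideal.map_comap_of_equiv, ← Ideal.comap_minimalPrimes_eq_of_surjective hsurj]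
    rfl
  have hpow : (Q.map (e : R →+* S)) ^ n = (Q ^ n).comap e.symm := by
    rw [← Ideal.map_pow, Ideal.map_comap_of_equiv]
  ext f
  rw [mem_symbPow, hQ, Set.forall_mem_image, hpow, Ideal.map_comap_of_equiv, Ideal.mem_comap,
    mem_symbPow]
  refine forall₂_congr fun P _ => ⟨?_, ?_⟩
  · rintro ⟨s, hs, hsf⟩
    rw [Ideal.mem_comap, map_mul] at hsf
    exact ⟨e.symm s, hs, hsf⟩
  · rintro ⟨s, hs, hsf⟩
    refine ⟨e s, by simpa [Ideal.mem_comap] using hs, ?_⟩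
    rwa [Ideal.mem_comap, map_mul, e.symm_apply_apply]

variable {k σ τ : Type*} [Field k]

lemma mem_maxHomIdeal_iff {f : MvPolynomial σ k} :
    f ∈ maxHomIdeal k σ ↔ coeff 0 f = 0 := by
  rw [maxHomIdeal, ← Set.image_univ, mem_ideal_span_X_image]
  constructor
  · intro h
    by_contra h0
    obtain ⟨i, -, hi⟩ := h 0 (mem_support_iff.2 h0)
    exact hi rfl
  · intro h m hm
    by_contra! hcon
    have : m = 0 := Finsupp.ext fun i => hcon i (Set.mem_univ i)
    exact mem_support_iff.1 hm (this ▸ h)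

lemma maxHomIdeal_isPrime : (maxHomIdeal k σ).IsPrime := by
  have : maxHomIdeal k σ = RingHom.ker (constantCoeff : MvPolynomial σ k →+* k) := by
    ext f
    rw [mem_maxHomIdeal_iff, RingHom.mem_ker, constantCoeff_eq]
  rw [this]
  exact RingHom.ker_isPrime _

lemma le_maxHomIdeal {I : Ideal (MvPolynomial σ k)} (hI : I ≠ ⊤) (hhom : IsHomogeneousIdeal I) :
    I ≤ maxHomIdeal k σ := by
  intro f hf
  rw [mem_maxHomIdeal_iff]
  by_contra h0
  have h1 := hhom f hf 0
  rw [homogeneousComponent_zero] at h1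
  exact hI (Ideal.eq_top_of_isUnit_mem _ h1 ((isUnit_iff_ne_zero.2 h0).map C))

lemma tensorEquivSum_tmul_one (f : MvPolynomial σ k) :
    tensorEquivSum k σ τ k (f ⊗ₜ 1) = rename Sum.inl f := by
  induction f using MvPolynomial.induction_on with
  | C a => rw [tensorEquivSum_C_tmul_one, rename_C]
  | add p q hp hq => rw [TensorProduct.add_tmul, map_add, map_add, hp, hq]
  | mul_X p i hp =>
    have : (p * X i) ⊗ₜ[k] (1 : MvPolynomial τ k) = (p ⊗ₜ 1) * (X i ⊗ₜ 1) := by simp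
    rw [this, map_mul, map_mul, hp, tensorEquivSum_X_tmul_one, rename_X]

lemma tensorEquivSum_one_tmul (f : MvPolynomial τ k) :
    tensorEquivSum k σ τ k (1 ⊗ₜ f) = rename Sum.inr f := by
  induction f using MvPolynomial.induction_on with
  | C a => rw [tensorEquivSum_one_tmul_C, rename_C]; rfl
  | add p q hp hq => rw [TensorProduct.tmul_add, map_add, map_add, hp, hq]
  | mul_X p i hp =>
    have : (1 : MvPolynomial σ k) ⊗ₜ[k] (p * X i) = (1 ⊗ₜ p) * (1 ⊗ₜ X i) := by simp
    rw [this, map_mul, map_mul, hp, tensorEquivSum_one_tmul_X, rename_X]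

end Transfer

/-- **Theorem 4.4(i)**: for nonzero proper homogeneous ideals `I ⊆ A = k[X]`, `J ⊆ B = k[Y]`
and `R = k[X,Y]`, for all `n ≥ 1`,
`depth R/(I+J)^{(n)} ≥ min_{i ∈ [1,n-1], j ∈ [1,n]} { depth A/I^{(n-i)} + depth B/J^{(i)} + 1,
 depth A/I^{(n-j+1)} + depth B/J^{(j)} }`. -/
theorem depth_symbPow_sum_lower_bound
    {k : Type} [Field k] {σ τ : Type} [Fintype σ] [Fintype τ]
    (I : Ideal (MvPolynomial σ k)) (J : Ideal (MvPolynomial τ k))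
    (hIbot : I ≠ ⊥) (hItop : I ≠ ⊤) (hIhom : IsHomogeneousIdeal I)
    (hJbot : J ≠ ⊥) (hJtop : J ≠ ⊤) (hJhom : IsHomogeneousIdeal J)
    (IR JR : Ideal (MvPolynomial (σ ⊕ τ) k))
    (hIR : IR = Ideal.map (rename Sum.inl : MvPolynomial σ k →ₐ[k] MvPolynomial (σ ⊕ τ) k) I)
    (hJR : JR = Ideal.map (rename Sum.inr : MvPolynomial τ k →ₐ[k] MvPolynomial (σ ⊕ τ) k) J)
    (n : ℕ) (hn : 1 ≤ n) :
    sInf ({d | ∃ i, 1 ≤ i ∧ i ≤ n - 1 ∧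
            d = idealDepth (maxHomIdeal k σ) (MvPolynomial σ k ⧸ symbPow I (n - i)) +
                idealDepth (maxHomIdeal k τ) (MvPolynomial τ k ⧸ symbPow J i) + 1} ∪
          {d | ∃ j, 1 ≤ j ∧ j ≤ n ∧
            d = idealDepth (maxHomIdeal k σ) (MvPolynomial σ k ⧸ symbPow I (n - j + 1)) +
                idealDepth (maxHomIdeal k τ) (MvPolynomial τ k ⧸ symbPow J j)})
      ≤ idealDepth (maxHomIdeal k (σ ⊕ τ))
          (MvPolynomial (σ ⊕ τ) k ⧸ symbPow (IR + JR) n) := by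
  subst hIR hJR
  let e := (tensorEquivSum k σ τ k).toRingEquiv
  have hR : IsNoetherianRing (MvPolynomial σ k ⊗[k] MvPolynomial τ k) :=
    isNoetherianRing_of_ringEquiv _ e.symm
  have hIm := le_maxHomIdeal hItop hIhom
  have hJm := le_maxHomIdeal hJtop hJhom
  have hprime : ∀ ρ : Type, (maxHomIdeal k ρ).IsPrime := fun ρ => maxHomIdeal_isPrime
  let m := (maxHomIdeal k (σ ⊕ τ)).comap (e : MvPolynomial σ k ⊗[k] MvPolynomial τ k →+* _)
  have hrename : ∀ {ρ : Type} (g : ρ → σ ⊕ τ), ∀ f ∈ maxHomIdeal k ρ,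
      rename g f ∈ maxHomIdeal k (σ ⊕ τ) := by
    intro ρ g f hf
    rw [mem_maxHomIdeal_iff, ← constantCoeff_eq] at hf ⊢
    rwa [constantCoeff_rename]
  have hmA : ∀ a ∈ maxHomIdeal k σ, a ⊗ₜ 1 ∈ m := by
    intro a ha
    have h : e (a ⊗ₜ 1) = rename Sum.inl a := tensorEquivSum_tmul_one a
    exact (Ideal.mem_comap ..).2 (h ▸ hrename _ a ha)
  have hmB : ∀ b ∈ maxHomIdeal k τ, 1 ⊗ₜ b ∈ m := by
    intro b hb
    have h : e (1 ⊗ₜ b) = rename Sum.inr b := tensorEquivSum_one_tmul b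
    exact (Ideal.mem_comap ..).2 (h ▸ hrename _ b hb)
  have hA : ∀ a, 1 ≤ a → DepthGE (maxHomIdeal k σ)
      (idealDepth (maxHomIdeal k σ) (MvPolynomial σ k ⧸ symbPow I a)) (symbPow I a) :=
    fun a ha => depthGE_idealDepth (hprime σ).ne_top
      (symbPow_le_prime (hprime σ) hIm (Nat.ne_of_gt ha))
  have hB : ∀ b, 1 ≤ b → DepthGE (maxHomIdeal k τ)
      (idealDepth (maxHomIdeal k τ) (MvPolynomial τ k ⧸ symbPow J b)) (symbPow J b) :=
    fun b hb => depthGE_idealDepth (hprime τ).ne_top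
      (symbPow_le_prime (hprime τ) hJm (Nat.ne_of_gt hb))
  have hmap : (tId k I J).map (e : MvPolynomial σ k ⊗[k] MvPolynomial τ k →+* _) =
      Ideal.map (rename Sum.inl : MvPolynomial σ k →ₐ[k] MvPolynomial (σ ⊕ τ) k) I +
      Ideal.map (rename Sum.inr : MvPolynomial τ k →ₐ[k] MvPolynomial (σ ⊕ τ) k) J := by
    rw [tId, Ideal.map_sup, Ideal.add_eq_sup]
    congr 1
    · refine (Ideal.map_map _ _).trans (congrArg (fun f => Ideal.map f I) ?_)
      exact RingHom.ext tensorEquivSum_tmul_one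
    · refine (Ideal.map_map _ _).trans (congrArg (fun f => Ideal.map f J) ?_)
      exact RingHom.ext tensorEquivSum_one_tmul
  have hm : m.map (e : MvPolynomial σ k ⊗[k] MvPolynomial τ k →+* _) = maxHomIdeal k (σ ⊕ τ) :=
    Ideal.map_comap_of_surjective _ e.surjective _
  have key : ∀ d : ℕ,
      (∀ i, 1 ≤ i → i ≤ n - 1 →
        d ≤ idealDepth (maxHomIdeal k σ) (MvPolynomial σ k ⧸ symbPow I (n - i)) +
          idealDepth (maxHomIdeal k τ) (MvPolynomial τ k ⧸ symbPow J i) + 1) →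
      (∀ j, 1 ≤ j → j ≤ n →
        d ≤ idealDepth (maxHomIdeal k σ) (MvPolynomial σ k ⧸ symbPow I (n - j + 1)) +
          idealDepth (maxHomIdeal k τ) (MvPolynomial τ k ⧸ symbPow J j)) →
      d ≤ idealDepth (maxHomIdeal k (σ ⊕ τ)) (MvPolynomial (σ ⊕ τ) k ⧸ symbPow
        (Ideal.map (rename Sum.inl : MvPolynomial σ k →ₐ[k] MvPolynomial (σ ⊕ τ) k) I +
          Ideal.map (rename Sum.inr : MvPolynomial τ k →ₐ[k] MvPolynomial (σ ⊕ τ) k) J) n) := by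
    intro d h1 h2
    have := (depthGE_symbPow_tId hmA hmB hA hB hn h1 h2).map_equiv e
    rw [← symbPow_map_equiv, hmap, hm] at this
    refine this.le_idealDepth (hprime _).ne_top
      (symbPow_le_prime (hprime _) (sup_le ?_ ?_) (by omega))
    · exact Ideal.map_le_iff_le_comap.2 fun f hf => hrename _ f (hIm hf)
    · exact Ideal.map_le_iff_le_comap.2 fun f hf => hrename _ f (hJm hf)
  exact key _ (fun i hi hi' => Nat.sInf_le (Or.inl ⟨i, hi, hi', rfl⟩))
    (fun j hj hj' => Nat.sInf_le (Or.inr ⟨j, hj, hj', rfl⟩))
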